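/- arXiv:1508.05718 — 2 statements merged into one kernel-verified Lean document; each statement's English description precedes it below -/
import Mathlib

section
/- Let 𝒜 be a finite separating union-closed family with universe elements x₁,…,x_m in order of increasing frequency. For 1 ≤ i ≤ m define M_i = ⋃_{A∈𝒜, x_i∉A} A, and M₀ = ⋃_{A∈𝒜} A. Then {x_{i+1},…,x_m} ⊆ M_i for all 0 ≤ i ≤ m-1. -/
variable {α : Type*} [DecidableEq α]

def UnionClosed (𝒜 : Finset (Finset α)) : Prop :=
  ∀ A ∈ 𝒜, ∀ B ∈ 𝒜, A ∪ B ∈ 𝒜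

def Separating (𝒜 : Finset (Finset α)) : Prop :=
  ∀ x ∈ 𝒜.sup id, ∀ y ∈ 𝒜.sup id, x ≠ y →
    ∃ A ∈ 𝒜, (x ∈ A ∧ y ∉ A) ∨ (y ∈ A ∧ x ∉ A)

def freq (𝒜 : Finset (Finset α)) (x : α) : ℕ := (𝒜.filter (fun A => x ∈ A)).card

theorem M_sets_contain_tail (𝒜 : Finset (Finset α))
    (huc : UnionClosed 𝒜) (hsep : Separating 𝒜)
    (m : ℕ) (x : ℕ → α)
    (hbij : Set.BijOn x (Set.Icc 1 m) (𝒜.sup id : Finset α))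
    (hmono : ∀ i j, 1 ≤ i → i ≤ j → j ≤ m → freq 𝒜 (x i) ≤ freq 𝒜 (x j))
    (M : ℕ → Finset α)
    (hM0 : M 0 = 𝒜.sup id)
    (hMi : ∀ i, 1 ≤ i → i ≤ m → M i = (𝒜.filter (fun A => x i ∉ A)).sup id) :
    ∀ i ≤ m - 1, ∀ j, i < j → j ≤ m → x j ∈ M i := by
  intro i him j hij hjm
  have hj : x j ∈ 𝒜.sup id := by
    have h := hbij.mapsTo (show j ∈ Set.Icc 1 m from ⟨by omega, hjm⟩)
    exact_mod_cast h
  rcases Nat.eq_zero_or_pos i with h0 | hi1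
  · rw [h0, hM0]; exact hj
  have him' : i ≤ m := by omega
  have hi : x i ∈ 𝒜.sup id := by
    have h := hbij.mapsTo (show i ∈ Set.Icc 1 m from ⟨hi1, him'⟩)
    exact_mod_cast h
  have hne : x i ≠ x j := by
    intro h
    have := hbij.injOn (show i ∈ Set.Icc 1 m from ⟨hi1, him'⟩)
      (show j ∈ Set.Icc 1 m from ⟨by omega, hjm⟩) h
    omega
  rw [hMi i hi1 him', Finset.mem_sup]
  by_contra hcon
  have hall : ∀ A ∈ 𝒜, x j ∈ A → x i ∈ A := by
    intro A hA hjA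
    by_contra hiA
    exact hcon ⟨A, Finset.mem_filter.2 ⟨hA, hiA⟩, hjA⟩
  have hsub : 𝒜.filter (fun A => x j ∈ A) ⊆ 𝒜.filter (fun A => x i ∈ A) := by
    intro A hA
    rw [Finset.mem_filter] at hA ⊢
    exact ⟨hA.1, hall A hA.1 hA.2⟩
  have heq := Finset.eq_of_subset_of_card_le hsub (hmono i j hi1 hij.le hjm)
  obtain ⟨A, hA, ⟨h1, h2⟩ | ⟨h1, h2⟩⟩ := hsep _ hi _ hj hne
  · have : A ∈ 𝒜.filter (fun A => x j ∈ A) := by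
      rw [heq]; exact Finset.mem_filter.2 ⟨hA, h1⟩
    exact h2 (Finset.mem_filter.1 this).2
  · exact h2 (hall A hA h1)
end

section
/- Let 𝒜 be a finite separating union-closed family of finite sets whose universe has m elements, and suppose |𝒜| ≤ 2(m + m/(log₂(m) − log₂log₂(m))) with m ≥ 13. Then there exists an element x of the universe contained in at least |𝒜|/2 member sets of 𝒜. -/
open Real

variable {α : Type*} [DecidableEq α]

/-- Union of all members avoiding `x`. -/
def avoidUnion (𝒜 : Finset (Finset α)) (x : α) : Finset α :=
  (𝒜.filter (fun A => x ∉ A)).sup id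

lemma uc_sup_mem (𝒜 : Finset (Finset α)) (huc : UnionClosed 𝒜) (T : Finset (Finset α))
    (hT : T ⊆ 𝒜) (hne : T.Nonempty) : T.sup id ∈ 𝒜 := by
  induction hne using Finset.Nonempty.cons_induction with
  | singleton a => simpa using hT (Finset.mem_singleton_self a)
  | cons a s ha hs ih =>
    rw [Finset.sup_cons]
    exact huc _ (hT (Finset.mem_cons_self a s)) _
      (ih (fun x hx => hT (Finset.mem_cons_of_mem hx)))

lemma mem_avoidUnion (𝒜 : Finset (Finset α)) (x y : α) :
    y ∈ avoidUnion 𝒜 x ↔ ∃ A ∈ 𝒜, x ∉ A ∧ y ∈ A := by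
  simp [avoidUnion, Finset.mem_sup, and_assoc]

lemma subset_avoidUnion (𝒜 : Finset (Finset α)) {x : α} {B : Finset α} (hB : B ∈ 𝒜)
    (hx : x ∉ B) : B ⊆ avoidUnion 𝒜 x := fun y hy =>
  (mem_avoidUnion 𝒜 x y).2 ⟨B, hB, hx, hy⟩

lemma not_mem_avoidUnion (𝒜 : Finset (Finset α)) (x : α) : x ∉ avoidUnion 𝒜 x := by
  rw [mem_avoidUnion]; rintro ⟨A, _, h1, h2⟩; exact h1 h2

lemma avoidUnion_injOn (𝒜 : Finset (Finset α)) (hsep : Separating 𝒜) :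
    Set.InjOn (avoidUnion 𝒜) (𝒜.sup id : Finset α) := by
  intro x hx y hy hxy
  by_contra hne
  obtain ⟨A, hA, h | h⟩ := hsep x hx y hy hne
  · have h1 := subset_avoidUnion 𝒜 hA h.2 h.1
    rw [← hxy] at h1
    exact not_mem_avoidUnion 𝒜 x h1
  · have h1 := subset_avoidUnion 𝒜 hA h.2 h.1
    rw [hxy] at h1
    exact not_mem_avoidUnion 𝒜 y h1

/-- A minimal transversal consisting of elements lying in all `avoidUnion`s but their own. -/
lemma exists_transversal (𝒜 : Finset (Finset α)) (huc : UnionClosed 𝒜) (hsep : Separating 𝒜)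
    (hav : ∀ x ∈ 𝒜.sup id, ∃ A ∈ 𝒜, x ∉ A) :
    ∃ X ⊆ 𝒜.sup id, (∀ x ∈ X, ∀ y ∈ 𝒜.sup id, y ≠ x → x ∈ avoidUnion 𝒜 y) ∧
      (∀ B ∈ 𝒜, B.Nonempty → (B ∩ X).Nonempty) ∧
      (∀ x ∈ X, ∃ B ∈ 𝒜, B ∩ X = {x}) := by
  classical
  set U := 𝒜.sup id with hU
  have hmem : ∀ x ∈ U, avoidUnion 𝒜 x ∈ 𝒜 := by
    intro x hx
    obtain ⟨A, hA, hxA⟩ := hav x hx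
    exact uc_sup_mem 𝒜 huc _ (Finset.filter_subset _ _) ⟨A, by simp [hA, hxA]⟩
  have hsubU : ∀ B ∈ 𝒜, B ⊆ U := fun B hB => Finset.le_sup (f := id) hB
  set M := U.filter (fun x => ∀ y ∈ U, y ≠ x → x ∈ avoidUnion 𝒜 y) with hM
  have hMt : ∀ B ∈ 𝒜, B.Nonempty → (B ∩ M).Nonempty := by
    intro B hB ⟨y, hy⟩
    have hyU : y ∈ U := hsubU B hB hy
    set S := U.filter (fun j => avoidUnion 𝒜 j ⊆ avoidUnion 𝒜 y) with hS
    have hSne : S.Nonempty := ⟨y, by simp [hS, hyU]⟩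
    obtain ⟨j, hjS, hjmin⟩ := Finset.exists_min_image S (fun j => (avoidUnion 𝒜 j).card) hSne
    have hjS' := Finset.mem_filter.1 hjS
    have hjM : j ∈ M := by
      refine Finset.mem_filter.2 ⟨hjS'.1, fun i hi hij => ?_⟩
      by_contra hj
      have hsub := subset_avoidUnion 𝒜 (hmem i hi) hj
      have hiS : i ∈ S := Finset.mem_filter.2 ⟨hi, hsub.trans hjS'.2⟩
      have := Finset.eq_of_subset_of_card_le hsub (hjmin i hiS)
      exact hij (avoidUnion_injOn 𝒜 hsep hi hjS'.1 this)
    refine ⟨j, Finset.mem_inter.2 ⟨?_, hjM⟩⟩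
    by_contra hjB
    exact not_mem_avoidUnion 𝒜 y (hjS'.2 (subset_avoidUnion 𝒜 hB hjB hy))
  set 𝒯 := M.powerset.filter (fun X => ∀ B ∈ 𝒜, B.Nonempty → (B ∩ X).Nonempty) with h𝒯
  have h𝒯ne : 𝒯.Nonempty := ⟨M, by simp [h𝒯]; simpa using hMt⟩
  obtain ⟨X, hX, hXmin⟩ := Finset.exists_min_image 𝒯 Finset.card h𝒯ne
  have hX' := Finset.mem_filter.1 hX
  have hXM := Finset.mem_powerset.1 hX'.1
  refine ⟨X, fun x hx => (Finset.mem_filter.1 (hXM hx)).1,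
    fun x hx => (Finset.mem_filter.1 (hXM hx)).2, hX'.2, fun x hx => ?_⟩
  have hnot : X.erase x ∉ 𝒯 := fun h => by
    have := hXmin _ h
    have := Finset.card_erase_lt_of_mem hx
    omega
  have : ¬ ∀ B ∈ 𝒜, B.Nonempty → (B ∩ X.erase x).Nonempty := fun h => hnot
    (Finset.mem_filter.2 ⟨Finset.mem_powerset.2 ((Finset.erase_subset _ _).trans hXM), h⟩)
  push Not at this
  obtain ⟨B, hB, hBne, hBe⟩ := this
  refine ⟨B, hB, ?_⟩
  obtain ⟨z, hz⟩ := hX'.2 B hB hBne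
  have key : ∀ w ∈ B ∩ X, w = x := by
    intro w hw
    by_contra hwx
    have : w ∈ B ∩ X.erase x := by
      rw [Finset.mem_inter] at hw
      simp [hw.1, hw.2, hwx]
    rw [hBe] at this
    simp at this
  exact Finset.eq_singleton_iff_unique_mem.2 ⟨key z hz ▸ hz, key⟩

lemma exists_rep (𝒜 : Finset (Finset α)) (huc : UnionClosed 𝒜) (X : Finset α)
    (h : ∀ x ∈ X, ∃ B ∈ 𝒜, B ∩ X = {x}) (S : Finset α) (hS : S.Nonempty) (hSX : S ⊆ X) :
    ∃ B ∈ 𝒜, B ∩ X = S := by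
  induction hS using Finset.Nonempty.cons_induction with
  | singleton a => exact h a (hSX (Finset.mem_singleton_self a))
  | cons a s ha hs ih =>
    obtain ⟨B, hB, hBs⟩ := ih (fun x hx => hSX (Finset.mem_cons_of_mem hx))
    obtain ⟨C, hC, hCa⟩ := h a (hSX (Finset.mem_cons_self a s))
    refine ⟨C ∪ B, huc _ hC _ hB, ?_⟩
    rw [Finset.union_inter_distrib_right, hBs, hCa, Finset.cons_eq_insert]
    rfl

lemma sum_j_choose (q : ℕ) :
    ∑ j ∈ Finset.range (q + 1 + 1), (((q + 1).choose j : ℕ) : ℤ) * (j : ℤ)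
      = (q + 1) * 2 ^ q := by
  rw [Finset.sum_range_succ']
  have : ∀ j ∈ Finset.range (q + 1), (((q + 1).choose (j + 1) : ℕ) : ℤ) * ((j + 1 : ℕ) : ℤ)
      = (q + 1) * ((q.choose j : ℕ) : ℤ) := by
    intro j _
    have := Nat.add_one_mul_choose_eq q j
    exact_mod_cast this.symm
  rw [Finset.sum_congr rfl this, ← Finset.mul_sum]
  have h2 := Nat.sum_range_choose q
  have h3 : (∑ j ∈ Finset.range (q + 1), ((q.choose j : ℕ) : ℤ)) = 2 ^ q := by exact_mod_cast h2
  rw [h3]; simp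

lemma sum_traces (X : Finset α) (q : ℕ) (hq : X.card = q + 2) :
    ∑ S ∈ X.powerset.filter (fun S => S.Nonempty ∧ S.card ≤ q), ((S.card : ℤ) - 1)
      = q * (2 ^ (q + 1) - q - 3) := by
  have h0 : ∑ S ∈ X.powerset.filter (fun S => S.Nonempty ∧ S.card ≤ q), ((S.card : ℤ) - 1)
      = ∑ S ∈ X.powerset, (fun j : ℕ => if 1 ≤ j ∧ j ≤ q then (j : ℤ) - 1 else 0) S.card := by
    rw [Finset.sum_filter]
    refine Finset.sum_congr rfl fun S _ => ?_
    simp only [← Finset.card_pos, Nat.lt_iff_add_one_le, zero_add]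
  rw [h0, Finset.sum_powerset_apply_card
    (fun j : ℕ => if 1 ≤ j ∧ j ≤ q then (j : ℤ) - 1 else 0), hq, Finset.sum_range_succ, Finset.sum_range_succ]
  have h1 : ∑ j ∈ Finset.range (q + 1), (q + 2).choose j •
      (if 1 ≤ j ∧ j ≤ q then (j : ℤ) - 1 else 0)
      = (∑ j ∈ Finset.range (q + 1), (((q + 2).choose j : ℕ) : ℤ) * ((j : ℤ) - 1)) + 1 := by
    rw [Finset.sum_range_succ', Finset.sum_range_succ' (n := q)]
    have : ∀ j ∈ Finset.range q, (q + 2).choose (j + 1) •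
      (if 1 ≤ j + 1 ∧ j + 1 ≤ q then ((j + 1 : ℕ) : ℤ) - 1 else 0)
       = (((q + 2).choose (j + 1) : ℕ) : ℤ) * (((j + 1 : ℕ) : ℤ) - 1) := by
      intro j hj
      rw [if_pos ⟨by omega, by have := Finset.mem_range.1 hj; omega⟩, nsmul_eq_mul]
    rw [Finset.sum_congr rfl this]
    simp
  rw [h1]
  have h2 := sum_j_choose (q + 1)
  have h3 := Nat.sum_range_choose (q + 2)
  have h3' : (∑ j ∈ Finset.range (q + 2 + 1), (((q + 2).choose j : ℕ) : ℤ)) = 2 ^ (q + 2) := by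
    exact_mod_cast h3
  rw [Finset.sum_range_succ, Finset.sum_range_succ] at h2 h3'
  have e1 : (q + 2).choose (q + 1) = q + 2 := Nat.choose_succ_self_right (q + 1)
  have e2 : (q + 2).choose (q + 2) = 1 := Nat.choose_self _
  simp only [show q + 1 + 1 = q + 2 from rfl, e1, e2] at h2 h3' ⊢
  simp only [mul_sub, Finset.sum_sub_distrib, mul_one]
  have n1 : ¬ (1 ≤ q + 1 ∧ q + 1 ≤ q) := by omega
  have n2 : ¬ (1 ≤ q + 2 ∧ q + 2 ≤ q) := by omega
  rw [if_neg n1, if_neg n2]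
  push_cast at h2 h3' ⊢
  rw [pow_succ] at h3'
  simp only [smul_zero]
  linarith

lemma comb_bound (𝒜 : Finset (Finset α)) (huc : UnionClosed 𝒜) (hsep : Separating 𝒜)
    (m : ℕ) (hm : (𝒜.sup id).card = m) (hm13 : 13 ≤ m) (F : ℕ) (hF : 2 * F + 1 ≤ 𝒜.card)
    (hF2 : 𝒜.card ≤ 2 * F + 2)
    (hfreq : ∀ x ∈ 𝒜.sup id, (𝒜.filter (fun A => x ∈ A)).card ≤ F) :
    ∃ q : ℕ, 1 ≤ q ∧
      (m : ℤ) - 1 + q * (2 ^ (q + 1) - q - 3) ≤ q * ((F : ℤ) - m) := by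
  classical
  set U := 𝒜.sup id with hU
  have hav : ∀ x ∈ U, ∃ A ∈ 𝒜, x ∉ A := by
    intro x hx
    by_contra! h
    have := hfreq x hx
    rw [Finset.filter_true_of_mem h] at this
    omega
  have hne : 𝒜.Nonempty := Finset.card_pos.1 (by omega)
  have hUmem : U ∈ 𝒜 := uc_sup_mem 𝒜 huc 𝒜 subset_rfl hne
  have hmem : ∀ x ∈ U, avoidUnion 𝒜 x ∈ 𝒜 := by
    intro x hx
    obtain ⟨A, hA, hxA⟩ := hav x hx
    exact uc_sup_mem 𝒜 huc _ (Finset.filter_subset _ _) ⟨A, by simp [hA, hxA]⟩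
  obtain ⟨X, hXU, hXav, hXt, hXmin⟩ := exists_transversal 𝒜 huc hsep hav
  have hXsum : ∑ A ∈ 𝒜, ((A ∩ X).card : ℤ) ≤ X.card * F := by
    have h1 : ∑ A ∈ 𝒜, (A ∩ X).card = ∑ x ∈ X, (𝒜.filter (fun A => x ∈ A)).card := by
      have : ∀ A ∈ 𝒜, (A ∩ X).card = ∑ x ∈ X, if x ∈ A then 1 else 0 := by
        intro A _
        rw [Finset.inter_comm, ← Finset.filter_mem_eq_inter, Finset.card_filter]
      rw [Finset.sum_congr rfl this, Finset.sum_comm]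
      refine Finset.sum_congr rfl fun x _ => ?_
      rw [Finset.card_filter]
    have h2 : ∑ x ∈ X, (𝒜.filter (fun A => x ∈ A)).card ≤ X.card * F := by
      have := Finset.sum_le_card_nsmul X (fun x => (𝒜.filter (fun A => x ∈ A)).card) F
        (fun x hx => hfreq x (hXU hx))
      simpa using this
    rw [← h1] at h2
    exact_mod_cast h2
  set 𝒟 := insert U (U.image (avoidUnion 𝒜)) with h𝒟
  have hUnot : U ∉ U.image (avoidUnion 𝒜) := by
    intro h
    obtain ⟨x, hx, hxU⟩ := Finset.mem_image.1 h
    have := not_mem_avoidUnion 𝒜 x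
    rw [hxU] at this
    exact this hx
  have h𝒟sub : 𝒟 ⊆ 𝒜 := by
    intro A hA
    rcases Finset.mem_insert.1 hA with rfl | hA
    · exact hUmem
    · obtain ⟨x, hx, rfl⟩ := Finset.mem_image.1 hA
      exact hmem x hx
  have h𝒟card : 𝒟.card = m + 1 := by
    rw [h𝒟, Finset.card_insert_of_notMem hUnot,
      Finset.card_image_of_injOn (avoidUnion_injOn 𝒜 hsep), hm]
  have hn : m + 1 ≤ 𝒜.card := h𝒟card ▸ Finset.card_le_card h𝒟sub
  have htr : ∀ y ∈ U, avoidUnion 𝒜 y ∩ X = X.erase y := by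
    intro y hy
    ext z
    simp only [Finset.mem_inter, Finset.mem_erase]
    constructor
    · rintro ⟨h1, h2⟩
      exact ⟨fun h => not_mem_avoidUnion 𝒜 y (h ▸ h1), h2⟩
    · rintro ⟨h1, h2⟩
      exact ⟨hXav z h2 y hy (Ne.symm h1), h2⟩
  have hUX : U ∩ X = X := Finset.inter_eq_right.2 hXU
  -- lower bound on all terms
  have hφ : ∀ A ∈ 𝒜, (if A = ∅ then (-1 : ℤ) else 0) ≤ ((A ∩ X).card : ℤ) - 1 := by
    intro A hA
    split_ifs with h
    · simp [h]
    · have := Finset.card_pos.2 (hXt A hA (Finset.nonempty_iff_ne_empty.2 h))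
      have : (1 : ℤ) ≤ ((A ∩ X).card : ℤ) := by exact_mod_cast this
      linarith
  have hrest : ∀ 𝒬 ⊆ 𝒜, (-1 : ℤ) ≤ ∑ A ∈ 𝒬, (((A ∩ X).card : ℤ) - 1) := by
    intro 𝒬 h𝒬
    refine le_trans ?_ (Finset.sum_le_sum fun A hA => hφ A (h𝒬 hA))
    rw [Finset.sum_ite_eq' 𝒬 ∅ (fun _ => (-1 : ℤ))]
    split_ifs <;> simp
  have htot : ∑ A ∈ 𝒜, (((A ∩ X).card : ℤ) - 1) ≤ X.card * F - 𝒜.card := by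
    rw [Finset.sum_sub_distrib]; simp; exact hXsum
  have hr0 : X.card ≠ 0 := by
    intro h
    have hUne : U.Nonempty := Finset.card_pos.1 (by omega)
    have := hXt U hUmem hUne
    rw [Finset.card_eq_zero.1 h] at this
    simp at this
  have hr1 : X.card ≠ 1 := by
    intro h
    have h1 := hrest 𝒜 subset_rfl
    have h2 := h1.trans htot
    rw [h] at h2
    push_cast at h2
    omega
  obtain ⟨q, hq⟩ : ∃ q, X.card = q + 2 := ⟨X.card - 2, by omega⟩
  have h𝒟sum : ∑ A ∈ 𝒟, (((A ∩ X).card : ℤ) - 1) = (q + 2) * m - (m + 1) := by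
    rw [Finset.sum_sub_distrib, Finset.sum_const, h𝒟card, h𝒟, Finset.sum_insert hUnot,
      Finset.sum_image (avoidUnion_injOn 𝒜 hsep), hUX, hq]
    have h1 : ∑ y ∈ U, ((avoidUnion 𝒜 y ∩ X).card : ℤ)
        = ∑ y ∈ U, ((q + 2 : ℤ) - if y ∈ X then 1 else 0) := by
      refine Finset.sum_congr rfl fun y hy => ?_
      rw [htr y hy]
      split_ifs with h
      · rw [Finset.card_erase_of_mem h, hq]; push_cast; ring
      · rw [Finset.erase_eq_of_notMem h, hq]; push_cast; ring
    have h2 : ∑ y ∈ U, (if y ∈ X then (1 : ℤ) else 0) = q + 2 := by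
      rw [← Finset.sum_filter, Finset.filter_mem_eq_inter, hUX]; simp [hq]
    rw [h1, Finset.sum_sub_distrib, h2]
    simp [hm]; ring
  set 𝒮 := X.powerset.filter (fun S => S.Nonempty ∧ S.card ≤ q) with h𝒮
  have hrep : ∀ S : Finset α, ∃ B : Finset α, S ∈ 𝒮 → B ∈ 𝒜 ∧ B ∩ X = S := by
    intro S
    by_cases hS : S ∈ 𝒮
    · have hS' := Finset.mem_filter.1 hS
      obtain ⟨B, hB, hBS⟩ := exists_rep 𝒜 huc X hXmin S hS'.2.1 (Finset.mem_powerset.1 hS'.1)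
      exact ⟨B, fun _ => ⟨hB, hBS⟩⟩
    · exact ⟨∅, fun h => absurd h hS⟩
  choose ρ hρ using hrep
  have hρinj : Set.InjOn ρ (𝒮 : Set (Finset α)) := by
    intro S hS T hT h
    rw [← (hρ S hS).2, ← (hρ T hT).2, h]
  have hdisj : Disjoint 𝒟 (𝒮.image ρ) := by
    rw [Finset.disjoint_left]
    intro A hA hA'
    obtain ⟨S, hS, rfl⟩ := Finset.mem_image.1 hA'
    have hc := (Finset.mem_filter.1 hS).2.2
    have hS2 := (hρ S hS).2
    rcases Finset.mem_insert.1 hA with h | h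
    · rw [h, hUX] at hS2
      rw [← hS2] at hc; omega
    · obtain ⟨y, hy, hyA⟩ := Finset.mem_image.1 h
      rw [← hyA, htr y hy] at hS2
      have := Finset.pred_card_le_card_erase (s := X) (a := y)
      rw [hS2] at this
      omega
  have hsub : 𝒟 ∪ 𝒮.image ρ ⊆ 𝒜 := by
    refine Finset.union_subset h𝒟sub fun A hA => ?_
    obtain ⟨S, hS, rfl⟩ := Finset.mem_image.1 hA
    exact (hρ S hS).1
  have hsplit := Finset.sum_sdiff hsub (f := fun A => (((A ∩ X).card : ℤ) - 1))
  rw [Finset.sum_union hdisj, h𝒟sum, Finset.sum_image hρinj] at hsplit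
  have hS3 : ∑ S ∈ 𝒮, (((ρ S ∩ X).card : ℤ) - 1) = q * (2 ^ (q + 1) - q - 3) := by
    rw [← sum_traces X q hq]
    exact Finset.sum_congr rfl fun S hS => by rw [(hρ S hS).2]
  rw [hS3] at hsplit
  have hR := hrest (𝒜 \ (𝒟 ∪ 𝒮.image ρ)) Finset.sdiff_subset
  have hFz : (2 * F + 1 : ℤ) ≤ 𝒜.card := by exact_mod_cast hF
  rw [hq] at htot
  push_cast at htot
  have hfin : (m : ℤ) - 1 + q * (2 ^ (q + 1) - q - 3) ≤ q * ((F : ℤ) - m) := by linarith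
  refine ⟨q, ?_, hfin⟩
  rcases Nat.eq_zero_or_pos q with h | h
  · subst h
    simp at hfin
    omega
  · exact h

lemma g_ge (x : ℝ) (hx : 2 ≤ x) (a b : ℕ) (hb : 0 < b)
    (h : 2 ^ a * (logb 2 x) ^ b ≤ x ^ b) :
    (a : ℝ) / b ≤ logb 2 x - logb 2 (logb 2 x) := by
  have hL : 1 ≤ logb 2 x := by
    rw [Real.le_logb_iff_rpow_le (by norm_num) (by linarith)]; simpa using hx
  have hbR : (0 : ℝ) < b := by exact_mod_cast hb
  have h1 := Real.logb_le_logb_of_le (b := 2) (by norm_num) (by positivity) h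
  rw [Real.logb_mul (by positivity) (by positivity), Real.logb_pow, Real.logb_pow,
    Real.logb_pow, Real.logb_self_eq_one (by norm_num)] at h1
  rw [div_le_iff₀ hbR]
  linarith

lemma logb_tangent (x : ℝ) (k : ℕ) (hx : (2 : ℝ) ^ k ≤ x) :
    logb 2 x ≤ k + 2 * (x / 2 ^ k - 1) := by
  have hp : (0 : ℝ) < 2 ^ k := by positivity
  have h1 : x = 2 ^ k * (x / 2 ^ k) := by field_simp
  have hge : 1 ≤ x / 2 ^ k := by rw [le_div_iff₀ hp]; linarith
  have h2 : logb 2 x = k + logb 2 (x / 2 ^ k) := by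
    conv_lhs => rw [h1]
    rw [Real.logb_mul (by positivity) (by positivity), Real.logb_pow,
      Real.logb_self_eq_one (by norm_num)]
    ring
  rw [h2]
  have h3 : Real.log (x / 2 ^ k) ≤ x / 2 ^ k - 1 := Real.log_le_sub_one_of_pos (by linarith)
  have hl2 : (1 / 2 : ℝ) ≤ Real.log 2 := by have := Real.log_two_gt_d9; linarith
  have h4 : logb 2 (x / 2 ^ k) ≤ 2 * (x / 2 ^ k - 1) := by
    unfold Real.logb
    rw [div_le_iff₀ (by linarith)]
    nlinarith
  linarith

lemma pow_ge_aux (q : ℕ) (hq : 4 ≤ q) : (25 : ℝ) ≤ 2 ^ (q + 1) - q - 3 := by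
  induction q, hq using Nat.le_induction with
  | base => norm_num
  | succ n hn ih =>
    rw [pow_succ]; push_cast
    have : (4 : ℝ) ≤ n := by exact_mod_cast hn
    linarith

lemma pow_ge_aux5 (q : ℕ) (hq : 5 ≤ q) : (56 : ℝ) ≤ 2 ^ (q + 1) - q - 3 := by
  induction q, hq using Nat.le_induction with
  | base => norm_num
  | succ n hn ih =>
    rw [pow_succ]; push_cast
    have : (5 : ℝ) ≤ n := by exact_mod_cast hn
    linarith

lemma pow_ge_aux3 (q : ℕ) (hq : 3 ≤ q) : (q : ℝ) + 3 ≤ 2 ^ q := by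
  induction q, hq using Nat.le_induction with
  | base => norm_num
  | succ n hn ih =>
    rw [pow_succ]; push_cast
    have : (3 : ℝ) ≤ n := by exact_mod_cast hn
    linarith

lemma pow_ge_aux2 (q : ℕ) (hq : 2 ≤ q) : (q : ℝ) + 4 ≤ 2 ^ (q + 1) := by
  induction q, hq using Nat.le_induction with
  | base => norm_num
  | succ n hn ih =>
    rw [pow_succ]; push_cast
    have : (2 : ℝ) ≤ n := by exact_mod_cast hn
    linarith

lemma pow_ge_aux7 (n : ℕ) (hn : 7 ≤ n) :
    ((n : ℝ) + 1) ^ 2 + 3 * (n + 1) + 1 ≤ 2 ^ n := by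
  induction n, hn using Nat.le_induction with
  | base => norm_num
  | succ n hn ih =>
    rw [pow_succ (2 : ℝ)]; push_cast
    have : (7 : ℝ) ≤ n := by exact_mod_cast hn
    nlinarith

lemma numeric_large (m q : ℕ) (hm : 128 ≤ m) (hq : 2 ≤ q) :
    (m : ℝ) / (logb 2 m - logb 2 (logb 2 m)) - 1 / 2
      < ((m : ℝ) - 1) / q + 2 ^ (q + 1) - q - 3 := by
  have hmR : (128 : ℝ) ≤ m := by exact_mod_cast hm
  have hqR : (2 : ℝ) ≤ q := by exact_mod_cast hq
  set L := logb 2 (m : ℝ) with hL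
  have hL1 : 7 ≤ L := by
    rw [hL, Real.le_logb_iff_rpow_le (by norm_num) (by linarith)]
    have : (2 : ℝ) ^ (7 : ℝ) = 128 := by
      rw [show (7 : ℝ) = ((7 : ℕ) : ℝ) by norm_num, Real.rpow_natCast]; norm_num
    rw [this]; exact hmR
  have hLm : L ^ 2 + 3 * L + 1 ≤ m := by
    have hlt : L < (Nat.log 2 m : ℝ) + 1 := by
      rw [hL, Real.logb_lt_iff_lt_rpow (by norm_num) (by linarith)]
      have := Nat.lt_pow_succ_log_self (b := 2) (by norm_num) m
      have h2 : (m : ℝ) < 2 ^ (Nat.log 2 m + 1) := by exact_mod_cast this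
      rw [← Nat.cast_succ, Real.rpow_natCast]
      exact h2
    have h7 : 7 ≤ Nat.log 2 m := by
      have := Nat.log_mono_right (b := 2) hm
      have h128 : Nat.log 2 128 = 7 := by
        rw [show 128 = 2 ^ 7 by norm_num, Nat.log_pow (by norm_num)]
      omega
    have h1 := pow_ge_aux7 _ h7
    have h2 : ((2 : ℝ) ^ (Nat.log 2 m)) ≤ m := by
      exact_mod_cast Nat.pow_log_le_self 2 (by omega)
    nlinarith
  have hg : L / 2 ≤ L - logb 2 L := by
    have h1 : L ^ 2 ≤ (m : ℝ) := by nlinarith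
    have h2 := Real.logb_le_logb_of_le (b := 2) (by norm_num) (by positivity) h1
    rw [Real.logb_pow, ← hL] at h2
    push_cast at h2
    linarith
  set g := L - logb 2 L with hgdef
  have hgpos : 0 < g := by linarith
  by_cases hqg : (q : ℝ) ≤ g
  · have h1 : (m : ℝ) / g ≤ m / q := by gcongr
    have h2 := pow_ge_aux2 q hq
    have h3 : ((m : ℝ) - 1) / q = m / q - 1 / q := by ring
    have h4 : 1 / (q : ℝ) ≤ 1 := by rw [div_le_one (by linarith)]; linarith
    linarith
  · push Not at hqg
    have h2q : (m : ℝ) / L ≤ 2 ^ q := by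
      have h1 : (2 : ℝ) ^ g ≤ 2 ^ (q : ℝ) :=
        Real.rpow_le_rpow_of_exponent_le (by norm_num) hqg.le
      rw [hgdef, Real.rpow_sub (by norm_num), hL,
        Real.rpow_logb (by norm_num) (by norm_num) (by linarith), ← hL,
        Real.rpow_logb (by norm_num) (by norm_num) (by linarith), Real.rpow_natCast] at h1
      exact h1
    have hq3 : 3 ≤ q := by
      have : (2 : ℝ) < q := by linarith
      exact_mod_cast this
    have h3 := pow_ge_aux3 q hq3
    by_cases hqL : (q : ℝ) ≤ L
    · have h1 : (m : ℝ) / g ≤ m / (L / 2) := by gcongr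
      have h2 : (m : ℝ) / (L / 2) = 2 * (m / L) := by field_simp
      have h4 : L + 3 ≤ ((m : ℝ) - 1) / q := by
        rw [le_div_iff₀ (by linarith)]; nlinarith
      rw [pow_succ]
      linarith
    · push Not at hqL
      have h1 : (m : ℝ) < 2 ^ q := by
        have := (Real.logb_lt_iff_lt_rpow (by norm_num) (by linarith)).1 (hL ▸ hqL)
        rwa [Real.rpow_natCast] at this
      have h2 : (m : ℝ) / g ≤ m := by
        rw [div_le_iff₀ hgpos]; nlinarith
      have h4 : 0 ≤ ((m : ℝ) - 1) / q := div_nonneg (by linarith) (by linarith)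
      rw [pow_succ]
      linarith

lemma numeric (m q : ℕ) (hm : 13 ≤ m) (hq : 1 ≤ q) :
    (m : ℝ) / (logb 2 m - logb 2 (logb 2 m)) - 1 / 2
      < ((m : ℝ) - 1) / q + 2 ^ (q + 1) - q - 3 := by
  have hmR : (13 : ℝ) ≤ m := by exact_mod_cast hm
  have hqR : (1 : ℝ) ≤ q := by exact_mod_cast hq
  have hnn : 0 ≤ ((m : ℝ) - 1) / q := div_nonneg (by linarith) (by linarith)
  -- consequence of a lower bound on the denominator
  have key : ∀ c : ℝ, 0 < c → c ≤ logb 2 m - logb 2 (logb 2 m) →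
      (m : ℝ) / (logb 2 m - logb 2 (logb 2 m)) ≤ m / c := by
    intro c hc h
    gcongr
  have h52 : 32 ≤ m → (5 : ℝ) / 2 ≤ logb 2 m - logb 2 (logb 2 m) := by
    intro h
    have hR : (32 : ℝ) ≤ m := by exact_mod_cast h
    have ht := logb_tangent m 5 (by norm_num; exact h)
    have hL0 : 0 ≤ logb 2 (m : ℝ) := Real.logb_nonneg (by norm_num) (by linarith)
    refine le_trans (by norm_num) (g_ge m (by linarith) 5 2 (by norm_num) ?_)
    norm_num at ht
    nlinarith
  have h2 : 16 ≤ m → (2 : ℝ) ≤ logb 2 m - logb 2 (logb 2 m) := by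
    intro h
    have hR : (16 : ℝ) ≤ m := by exact_mod_cast h
    have ht := logb_tangent m 4 (by norm_num; exact h)
    refine le_trans (by norm_num) (g_ge m (by linarith) 2 1 (by norm_num) ?_)
    norm_num at ht ⊢
    linarith
  have h85 : m < 16 → (8 : ℝ) / 5 ≤ logb 2 m - logb 2 (logb 2 m) := by
    intro h
    have hR : (m : ℝ) ≤ 16 := by exact_mod_cast h.le
    have hlo : (18 : ℝ) / 5 ≤ logb 2 m := by
      have h1 : ((2 : ℝ) ^ 18) ≤ (m : ℝ) ^ 5 := by
        have : (13 : ℝ) ^ 5 ≤ (m : ℝ) ^ 5 := by gcongr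
        norm_num at this ⊢
        linarith
      have h2 := Real.logb_le_logb_of_le (b := 2) (by norm_num) (by positivity) h1
      rw [Real.logb_pow, Real.logb_pow, Real.logb_self_eq_one (by norm_num)] at h2
      push_cast at h2
      linarith
    have hup : logb 2 (m : ℝ) ≤ 2 ^ 2 := by
      have h2 := Real.logb_le_logb_of_le (b := 2) (by norm_num) (by positivity) hR
      rw [show (16 : ℝ) = 2 ^ 4 by norm_num, Real.logb_pow,
        Real.logb_self_eq_one (by norm_num)] at h2
      push_cast at h2
      linarith
    have h3 := Real.logb_le_logb_of_le (b := 2) (by norm_num) (by linarith) hup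
    rw [Real.logb_pow, Real.logb_self_eq_one (by norm_num)] at h3
    push_cast at h3
    linarith
  -- bounds in the three small ranges
  by_cases hm16 : m < 16
  · have hk := key (8 / 5) (by norm_num) (h85 hm16)
    have hR : (m : ℝ) ≤ 16 := by exact_mod_cast hm16.le
    by_cases hq4 : 4 ≤ q
    · have := pow_ge_aux q hq4
      linarith
    · interval_cases q <;> norm_num at hk ⊢ <;> linarith
  by_cases hm48 : m < 48
  · have hk := key 2 (by norm_num) (h2 (by omega))
    have hR : (m : ℝ) ≤ 48 := by exact_mod_cast hm48.le
    by_cases hq4 : 4 ≤ q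
    · have := pow_ge_aux q hq4
      linarith
    · interval_cases q <;> norm_num at hk ⊢ <;> linarith
  have hk := key (5 / 2) (by norm_num) (h52 (by omega))
  by_cases hq1 : q = 1
  · subst hq1
    norm_num at hk ⊢
    linarith
  by_cases hm128 : m < 128
  · have hR : (m : ℝ) ≤ 128 := by exact_mod_cast hm128.le
    by_cases hq5 : 5 ≤ q
    · have := pow_ge_aux5 q hq5
      linarith
    · interval_cases q <;> norm_num at hk ⊢ <;> linarith
  · exact numeric_large m q (by omega) (by omega)

theorem main_theorem (𝒜 : Finset (Finset α))
    (huc : UnionClosed 𝒜) (hsep : Separating 𝒜)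
    (m : ℕ) (hm : (𝒜.sup id).card = m) (hm13 : 13 ≤ m)
    (hcard : (𝒜.card : ℝ) ≤
      2 * ((m : ℝ) + m / (logb 2 m - logb 2 (logb 2 m)))) :
    ∃ x ∈ 𝒜.sup id, 2 * (𝒜.filter (fun A => x ∈ A)).card ≥ 𝒜.card := by
  by_contra! hcon
  have hUne : (𝒜.sup id).Nonempty := Finset.card_pos.1 (by omega)
  obtain ⟨x₀, hx₀⟩ := hUne
  have hpos := hcon x₀ hx₀
  obtain ⟨q, hq1, hq⟩ := comb_bound 𝒜 huc hsep m hm hm13 ((𝒜.card - 1) / 2) (by omega)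
    (by omega) (fun x hx => by have := hcon x hx; omega)
  set F := (𝒜.card - 1) / 2 with hF
  have hFn : 2 * F + 1 ≤ 𝒜.card := by omega
  have hFnR : 2 * (F : ℝ) + 1 ≤ 𝒜.card := by exact_mod_cast hFn
  have hqR : ((m : ℝ) - 1 + q * (2 ^ (q + 1) - q - 3)) ≤ q * ((F : ℝ) - m) := by
    exact_mod_cast hq
  have hnum := numeric m q hm13 hq1
  have hq0 : (0 : ℝ) < q := by exact_mod_cast hq1
  have h1 : ((m : ℝ) - 1) / q + 2 ^ (q + 1) - q - 3 ≤ (F : ℝ) - m := by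
    have : ((m : ℝ) - 1) / q ≤ (F : ℝ) - m - (2 ^ (q + 1) - q - 3) := by
      rw [div_le_iff₀ hq0]; linarith
    linarith
  linarith
end
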